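/- arXiv:2503.12766 — 5 statements merged into one kernel-verified Lean document; each statement's English description precedes it below -/
import Mathlib

section
/- Let X be an ω-well-filtered coherent d-space. If the product space X × X is a Fréchet space, then X is sober. -/
/-- A subset of a topological space is saturated if it is the intersection of the open sets
containing it. -/
def IsSaturatedSet {X : Type*} [TopologicalSpace X] (A : Set X) : Prop :=
  A = ⋂₀ {U : Set X | IsOpen U ∧ A ⊆ U}

/-- A space is ω-well-filtered if for every countable filtered family 𝓕 of compact saturated
sets and every open U with ⋂𝓕 ⊆ U, some member of 𝓕 is contained in U. -/
def OmegaWellFiltered (X : Type*) [TopologicalSpace X] : Prop :=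
  ∀ 𝓕 : Set (Set X), 𝓕.Countable → 𝓕.Nonempty →
    (∀ K ∈ 𝓕, IsCompact K ∧ IsSaturatedSet K) →
    DirectedOn (fun A B => B ⊆ A) 𝓕 →
    ∀ U : Set X, IsOpen U → ⋂₀ 𝓕 ⊆ U → ∃ K ∈ 𝓕, K ⊆ U

/-- A space is coherent if the intersection of any two compact saturated sets is compact. -/
def Coherent (X : Type*) [TopologicalSpace X] : Prop :=
  ∀ K Q : Set X, IsCompact K → IsSaturatedSet K → IsCompact Q → IsSaturatedSet Q →
    IsCompact (K ∩ Q)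

/-- A space is a d-space (monotone convergence space) if every subset directed under the
specialization order (x ≤ y iff x ∈ cl {y}, i.e. y ⤳ x) has a supremum x for that order
with closure D = closure {x}. -/
def DSpace (X : Type*) [TopologicalSpace X] : Prop :=
  ∀ D : Set X, D.Nonempty → DirectedOn (fun a b => b ⤳ a) D →
    ∃ x : X, (∀ d ∈ D, x ⤳ d) ∧ (∀ y : X, (∀ d ∈ D, y ⤳ d) → y ⤳ x) ∧
      closure D = closure {x}

/-!
Any two points `x`, `y` of an irreducible closed set `F` lie in the closure of its diagonal in
`X × X`, so the Fréchet property yields a single sequence in `F` converging to both. The saturated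
tails of that sequence, taken once with `x` and once with `y`, are compact and shrink to the upper
sets of `x` and of `y`. Coherence makes their intersections compact, and as these all meet `F`,
ω-well-filteredness gives a point of `F` above both `x` and `y`. Hence `F` is directed, and its
supremum is a generic point.
-/

open Filter Set Topology

section Saturated

variable {X : Type*} [TopologicalSpace X] {A B : Set X}

theorem isSaturatedSet_iff_nhdsKer_eq : IsSaturatedSet A ↔ nhdsKer A = A := by
  rw [nhdsKer_def, IsSaturatedSet, eq_comm]

theorem isSaturatedSet_nhdsKer : IsSaturatedSet (nhdsKer A) :=
  isSaturatedSet_iff_nhdsKer_eq.2 (nhdsKer_nhdsKer A)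

theorem IsSaturatedSet.inter (hA : IsSaturatedSet A) (hB : IsSaturatedSet B) :
    IsSaturatedSet (A ∩ B) := by
  rw [isSaturatedSet_iff_nhdsKer_eq] at *
  refine Subset.antisymm ?_ subset_nhdsKer
  calc nhdsKer (A ∩ B) ⊆ nhdsKer A ∩ nhdsKer B := nhdsKer_inter_subset
    _ = A ∩ B := by rw [hA, hB]

end Saturated

section WellFiltered

variable {X : Type*} [TopologicalSpace X]

theorem OmegaWellFiltered.exists_subset_of_antitone (hX : OmegaWellFiltered X) {K : ℕ → Set X}
    (hK : Antitone K) (hcomp : ∀ n, IsCompact (K n)) (hsat : ∀ n, IsSaturatedSet (K n))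
    {U : Set X} (hU : IsOpen U) (hKU : ⋂ n, K n ⊆ U) : ∃ n, K n ⊆ U := by
  obtain ⟨_, ⟨n, rfl⟩, hn⟩ := hX (range K) (countable_range K) (range_nonempty K)
    (forall_mem_range.2 fun n => ⟨hcomp n, hsat n⟩) hK.directed_ge.directedOn_range U hU hKU
  exact ⟨n, hn⟩

theorem OmegaWellFiltered.iInter_inter_nonempty (hX : OmegaWellFiltered X) {K : ℕ → Set X}
    (hK : Antitone K) (hcomp : ∀ n, IsCompact (K n)) (hsat : ∀ n, IsSaturatedSet (K n))
    {F : Set X} (hF : IsClosed F) (hKF : ∀ n, (K n ∩ F).Nonempty) :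
    ((⋂ n, K n) ∩ F).Nonempty := by
  by_contra hempty
  obtain ⟨n, hn⟩ := hX.exists_subset_of_antitone hK hcomp hsat hF.isOpen_compl
    (disjoint_iff_inter_eq_empty.2 (not_nonempty_iff_eq_empty.1 hempty)).subset_compl_right
  exact (hKF n).not_disjoint (disjoint_left.2 hn)

end WellFiltered

/-- The saturation of the tail `{z n, z (n + 1), …}` of a sequence, together with a point `x`.
When `z` converges to `x`, adjoining `x` is what makes this set compact. -/
def saturatedTail {X : Type*} [TopologicalSpace X] (x : X) (z : ℕ → X) (n : ℕ) : Set X :=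
  nhdsKer (insert x (z '' Ici n))

section SaturatedTail

variable {X : Type*} [TopologicalSpace X] {x y : X} {z : ℕ → X}

theorem isSaturatedSet_saturatedTail (n : ℕ) : IsSaturatedSet (saturatedTail x z n) :=
  isSaturatedSet_nhdsKer

theorem isCompact_saturatedTail (hz : Tendsto z atTop (𝓝 x)) (n : ℕ) :
    IsCompact (saturatedTail x z n) := by
  have htail : z '' Ici n = range fun k => z (k + n) := by
    ext a
    simp only [mem_image, mem_Ici, mem_range, le_iff_exists_add', ↓existsAndEq, true_and]
  rw [saturatedTail, htail]
  exact ((tendsto_add_atTop_iff_nat n).2 hz).isCompact_insert_range.nhdsKer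

theorem antitone_saturatedTail : Antitone (saturatedTail x z) := fun _ _ hmn =>
  nhdsKer_mono (insert_subset_insert (image_mono (Ici_subset_Ici.2 hmn)))

theorem mem_saturatedTail_of_le {m n : ℕ} (hnm : n ≤ m) : z m ∈ saturatedTail x z n :=
  subset_nhdsKer (mem_insert_of_mem x (mem_image_of_mem z hnm))

theorem iInter_saturatedTail (hz : Tendsto z atTop (𝓝 x)) :
    ⋂ n, saturatedTail x z n = nhdsKer {x} := by
  refine Subset.antisymm (fun p hp => mem_nhdsKer.2 fun U hU hxU => ?_) ?_
  · rw [singleton_subset_iff] at hxU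
    obtain ⟨N, hN⟩ := eventually_atTop.1 (hz.eventually_mem (hU.mem_nhds hxU))
    have htail : insert x (z '' Ici N) ⊆ U := insert_subset hxU (image_subset_iff.2 hN)
    exact hU.nhdsKer_subset.2 htail (mem_iInter.1 hp N)
  · exact subset_iInter fun n => nhdsKer_mono (singleton_subset_iff.2 (mem_insert x _))

theorem exists_mem_specializes_of_tendsto (hwf : OmegaWellFiltered X) (hcoh : Coherent X)
    {F : Set X} (hF : IsClosed F) (hzF : ∃ᶠ n in atTop, z n ∈ F)
    (hx : Tendsto z atTop (𝓝 x)) (hy : Tendsto z atTop (𝓝 y)) :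
    ∃ p ∈ F, p ⤳ x ∧ p ⤳ y := by
  let K : ℕ → Set X := fun n => saturatedTail x z n ∩ saturatedTail y z n
  have hK : Antitone K := antitone_saturatedTail.inf antitone_saturatedTail
  have hcomp (n : ℕ) : IsCompact (K n) :=
    hcoh _ _ (isCompact_saturatedTail hx n) (isSaturatedSet_saturatedTail n)
      (isCompact_saturatedTail hy n) (isSaturatedSet_saturatedTail n)
  have hsat (n : ℕ) : IsSaturatedSet (K n) :=
    (isSaturatedSet_saturatedTail n).inter (isSaturatedSet_saturatedTail n)
  have hKF (n : ℕ) : (K n ∩ F).Nonempty := by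
    obtain ⟨m, hnm, hmF⟩ := frequently_atTop.1 hzF n
    exact ⟨z m, ⟨mem_saturatedTail_of_le hnm, mem_saturatedTail_of_le hnm⟩, hmF⟩
  have hinter : ⋂ n, K n = nhdsKer {x} ∩ nhdsKer {y} := by
    rw [iInter_inter_distrib, iInter_saturatedTail hx, iInter_saturatedTail hy]
  obtain ⟨p, hp, hpF⟩ := hwf.iInter_inter_nonempty hK hcomp hsat hF hKF
  rw [hinter] at hp
  exact ⟨p, hpF, mem_nhdsKer_singleton.1 hp.1, mem_nhdsKer_singleton.1 hp.2⟩

end SaturatedTail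

section Irreducible

variable {X : Type*} [TopologicalSpace X]

theorem prodMk_mem_closure_image_diag {S : Set X} (hS : IsPreirreducible S) {x y : X}
    (hx : x ∈ closure S) (hy : y ∈ closure S) : (x, y) ∈ closure ((fun a => (a, a)) '' S) := by
  refine mem_closure_iff_nhds.2 fun W hW => ?_
  obtain ⟨U, V, hU, hxU, hV, hyV, hUV⟩ := mem_nhds_prod_iff'.1 hW
  obtain ⟨a, haS, haU, haV⟩ := hS U V hU hV
    (inter_comm U S ▸ mem_closure_iff.1 hx U hU hxU)
    (inter_comm V S ▸ mem_closure_iff.1 hy V hV hyV)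
  exact ⟨(a, a), hUV ⟨haU, haV⟩, mem_image_of_mem _ haS⟩

theorem exists_seq_tendsto_tendsto_of_isPreirreducible [FrechetUrysohnSpace (X × X)] {S : Set X}
    (hS : IsPreirreducible S) {x y : X} (hx : x ∈ closure S) (hy : y ∈ closure S) :
    ∃ z : ℕ → X, (∀ n, z n ∈ S) ∧ Tendsto z atTop (𝓝 x) ∧ Tendsto z atTop (𝓝 y) := by
  obtain ⟨w, hw, hlim⟩ := mem_closure_iff_seq_limit.1 (prodMk_mem_closure_image_diag hS hx hy)
  choose z hzS hzw using hw
  obtain rfl : (fun n => (z n, z n)) = w := funext hzw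
  exact ⟨z, hzS, hlim.fst_nhds, hlim.snd_nhds⟩

theorem directedOn_specializes_of_isPreirreducible [FrechetUrysohnSpace (X × X)]
    (hwf : OmegaWellFiltered X) (hcoh : Coherent X) {F : Set X} (hirr : IsPreirreducible F)
    (hF : IsClosed F) : DirectedOn (fun a b => b ⤳ a) F := by
  intro x hx y hy
  obtain ⟨z, hzF, hzx, hzy⟩ := exists_seq_tendsto_tendsto_of_isPreirreducible hirr
    (subset_closure hx) (subset_closure hy)
  exact exists_mem_specializes_of_tendsto hwf hcoh hF (Frequently.of_forall hzF) hzx hzy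

theorem DSpace.exists_isGenericPoint_closure (hX : DSpace X) {D : Set X} (hne : D.Nonempty)
    (hD : DirectedOn (fun a b => b ⤳ a) D) : ∃ x, IsGenericPoint x (closure D) := by
  obtain ⟨x, -, -, hx⟩ := hX D hne hD
  exact ⟨x, hx.symm⟩

end Irreducible

theorem stmt4_general {X : Type*} [TopologicalSpace X]
    (h1 : OmegaWellFiltered X) (h2 : Coherent X) (h3 : DSpace X)
    [FrechetUrysohnSpace (X × X)] :
    QuasiSober X := by
  refine ⟨fun {F} hirr hF => ?_⟩
  have hdir : DirectedOn (fun a b => b ⤳ a) F :=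
    directedOn_specializes_of_isPreirreducible h1 h2 hirr.isPreirreducible hF
  simpa only [hF.closure_eq] using h3.exists_isGenericPoint_closure hirr.nonempty hdir

/-- Let X be an ω-well-filtered coherent d-space. If the product space X × X is
a Fréchet space, then X is sober. -/
theorem stmt4 {X : Type*} [TopologicalSpace X] [T0Space X]
    (h1 : OmegaWellFiltered X) (h2 : Coherent X) (h3 : DSpace X)
    [FrechetUrysohnSpace (X × X)] :
    QuasiSober X :=
  stmt4_general h1 h2 h3
end

section
/- Let X be an ω type P-space. Then the lattice 𝒪(X) of open subsets of X, equipped with the Scott topology, is sober. -/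
/-- A topological space is an ω type space if its topology is generated by a subbase
consisting of countable sets. -/
def OmegaTypeSpace (X : Type*) [t : TopologicalSpace X] : Prop :=
  ∃ S : Set (Set X), (∀ s ∈ S, s.Countable) ∧ t = TopologicalSpace.generateFrom S

/-- A topological space is a P-space if every countable intersection of open sets is open. -/
def PSpace (X : Type*) [TopologicalSpace X] : Prop :=
  ∀ S : Set (Set X), S.Countable → (∀ U ∈ S, IsOpen U) → IsOpen (⋂₀ S)

/-- A poset is Scott sober if, equipped with its Scott topology, it is a sober space
(T0 and every irreducible closed set is the closure of a point). -/
def ScottSober (L : Type*) [Preorder L] : Prop :=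
  @T0Space L (Topology.scott L Set.univ) ∧ @QuasiSober L (Topology.scott L Set.univ)

/-!
In a P-space the neighbourhood filters are closed under countable intersections, so a countable
neighbourhood of `x` makes `𝓝 x` principal. In an ω type space the only points without a countable
neighbourhood are those in no subbasic set, and their only neighbourhood is the whole space. Hence
an ω type P-space is Alexandrov-discrete, its compact open sets form a basis, and its lattice of
open sets is algebraic.

If `F` is an irreducible Scott-closed subset of an algebraic lattice, then any two compact elements
`c` and `d` of `F` have an upper bound in `F`, because `Ici c` and `Ici d` are Scott-open sets
meeting `F`. So the compact elements of `F` are directed, their supremum `sSup F` lies in `F`, and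
`F` is the closure of that point.
-/

open Set Filter Topology TopologicalSpace

section AlexandrovDiscrete

variable {X : Type*}

theorem principal_ker_eq_of_countable_mem {l : Filter X} [CountableInterFilter l] {s : Set X}
    (hs : s.Countable) (hsl : s ∈ l) : 𝓟 l.ker = l := by
  refine le_antisymm (giPrincipalKer.gc.l_u_le l) (le_principal_iff.2 ?_)
  have hsep : ∀ y ∈ s \ l.ker, ∃ t ∈ l, y ∉ t := fun y hy => by
    simpa only [mem_ker, not_forall, exists_prop] using hy.2
  choose! t htl hyt using hsep
  have hinter : ⋂ y ∈ s \ l.ker, t y ∈ l :=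
    (countable_bInter_mem (hs.mono sdiff_subset)).2 htl
  filter_upwards [hsl, hinter] with y hys hy
  by_contra hyl
  exact hyt y ⟨hys, hyl⟩ (mem_iInter₂.1 hy y ⟨hys, hyl⟩)

variable [TopologicalSpace X]

theorem PSpace.countableInterFilter_nhds (h : PSpace X) (x : X) : CountableInterFilter (𝓝 x) := by
  refine ⟨fun S hSc hS => ?_⟩
  have hopen : IsOpen (⋂₀ (interior '' S)) :=
    h _ (hSc.image _) (forall_mem_image.2 fun _ _ => isOpen_interior)
  have hx : x ∈ ⋂₀ (interior '' S) :=
    mem_sInter.2 (forall_mem_image.2 fun s hs => mem_interior_iff_mem_nhds.2 (hS s hs))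
  refine mem_of_superset (hopen.mem_nhds hx) (subset_sInter fun s hs => ?_)
  exact (sInter_subset_of_mem (mem_image_of_mem _ hs)).trans interior_subset

theorem OmegaTypeSpace.exists_countable_mem_nhds_or_nhds_eq_top (h : OmegaTypeSpace X) (x : X) :
    (∃ s ∈ 𝓝 x, s.Countable) ∨ 𝓝 x = ⊤ := by
  obtain ⟨B, hBc, hB⟩ := h
  by_cases hx : ∃ s ∈ B, x ∈ s
  · obtain ⟨s, hsB, hxs⟩ := hx
    have hs : IsOpen s := hB ▸ isOpen_generateFrom_of_mem hsB
    exact .inl ⟨s, hs.mem_nhds hxs, hBc s hsB⟩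
  · rw [hB, nhds_generateFrom]
    exact .inr (iInf₂_eq_top.2 fun s hs => (hx ⟨s, hs.2, hs.1⟩).elim)

theorem OmegaTypeSpace.alexandrovDiscrete (hω : OmegaTypeSpace X) (hP : PSpace X) :
    AlexandrovDiscrete X := by
  refine alexandrovDiscrete_iff_nhds.2 fun x => ?_
  rw [nhdsKer_singleton_eq_ker_nhds]
  rcases hω.exists_countable_mem_nhds_or_nhds_eq_top x with ⟨s, hsx, hs⟩ | htop
  · have := hP.countableInterFilter_nhds x
    exact (principal_ker_eq_of_countable_mem hs hsx).symm
  · rw [htop, ker_top, principal_univ]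

theorem prespectralSpace_of_alexandrovDiscrete [AlexandrovDiscrete X] : PrespectralSpace X := by
  refine ⟨isTopologicalBasis_of_isOpen_of_nhds (fun _ hU => hU.1) fun x U hxU hU => ?_⟩
  exact ⟨nhdsKer {x}, ⟨isOpen_nhdsKer, isCompact_singleton.nhdsKer⟩, subset_nhdsKer rfl,
    nhdsKer_minimal (singleton_subset_iff.2 hxU) hU⟩

theorem isCompactlyGenerated_opens [PrespectralSpace X] : IsCompactlyGenerated (Opens X) := by
  refine ⟨fun U => ?_⟩
  obtain ⟨S, hS, hU⟩ := Opens.isBasis_iff_cover.1 (PrespectralSpace.isBasis_opens X) U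
  exact ⟨S, fun V hV => (Opens.isCompactElement_iff V).2 (hS hV), hU.symm⟩

end AlexandrovDiscrete

section Scott

variable {L : Type*}

theorem isCompactElement_bot [PartialOrder L] [OrderBot L] : IsCompactElement (⊥ : L) :=
  fun _ _ hne _ _ _ => hne.imp fun _ hx => ⟨hx, bot_le⟩

theorem isCompactElement_sup [SemilatticeSup L] {c d : L} (hc : IsCompactElement c)
    (hd : IsCompactElement d) : IsCompactElement (c ⊔ d) := by
  intro s u hne hdir hu hle
  obtain ⟨x, hxs, hcx⟩ := hc s u hne hdir hu (le_sup_left.trans hle)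
  obtain ⟨y, hys, hdy⟩ := hd s u hne hdir hu (le_sup_right.trans hle)
  obtain ⟨z, hzs, hxz, hyz⟩ := hdir x hxs y hys
  exact ⟨z, hzs, sup_le (hcx.trans hxz) (hdy.trans hyz)⟩

theorem isLUB_isCompactElement_sSup [CompleteLattice L] [IsCompactlyGenerated L] {F : Set L}
    (hF : IsLowerSet F) : IsLUB {c | IsCompactElement c ∧ c ∈ F} (sSup F) := by
  refine ⟨fun c hc => le_sSup hc.2, fun b hb => sSup_le fun x hx => ?_⟩
  exact le_iff_compact_le_imp.2 fun c hc hcx => hb ⟨hc, hF hcx hx⟩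

variable [TopologicalSpace L]

theorem isOpen_Ici_of_isCompactElement [PartialOrder L] {D : Set (Set L)} [IsScott L D] {c : L}
    (hc : IsCompactElement c) : IsOpen (Ici c) :=
  (IsScott.isOpen_iff_isUpperSet_and_dirSupInaccOn (D := D)).2
    ⟨isUpperSet_Ici c, fun s _ hne hdir u hu hcu => hc s u hne hdir hu hcu⟩

theorem directedOn_isCompactElement_of_isPreirreducible [SemilatticeSup L] {D : Set (Set L)}
    [IsScott L D] {F : Set L} (hF : IsPreirreducible F) (hlow : IsLowerSet F) :
    DirectedOn (· ≤ ·) {c | IsCompactElement c ∧ c ∈ F} := by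
  rintro c ⟨hc, hcF⟩ d ⟨hd, hdF⟩
  obtain ⟨z, hzF, hcz, hdz⟩ : (F ∩ (Ici c ∩ Ici d)).Nonempty :=
    hF _ _ (isOpen_Ici_of_isCompactElement (D := D) hc) (isOpen_Ici_of_isCompactElement (D := D) hd)
      ⟨c, hcF, self_mem_Ici⟩ ⟨d, hdF, self_mem_Ici⟩
  exact ⟨c ⊔ d, ⟨isCompactElement_sup hc hd, hlow (sup_le hcz hdz) hzF⟩, le_sup_left, le_sup_right⟩

variable [CompleteLattice L] [IsCompactlyGenerated L] [IsScott L univ]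

theorem sSup_mem_of_isIrreducible_of_isClosed {F : Set L} (hF : IsIrreducible F)
    (hFc : IsClosed F) : sSup F ∈ F := by
  have hlow : IsLowerSet F := IsScott.isLowerSet_of_isClosed hFc
  obtain ⟨a, ha⟩ := hF.nonempty
  have hne : {c | IsCompactElement c ∧ c ∈ F}.Nonempty :=
    ⟨⊥, isCompactElement_bot, hlow bot_le ha⟩
  exact IsScott.dirSupClosed_of_isClosed hFc (fun _ hc => hc.2) hne
    (directedOn_isCompactElement_of_isPreirreducible (D := univ) hF.isPreirreducible hlow)
    (isLUB_isCompactElement_sSup hlow)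

theorem quasiSober_of_isCompactlyGenerated : QuasiSober L := by
  refine ⟨fun {F} hF hFc => ⟨sSup F, ?_⟩⟩
  rw [isGenericPoint_def, IsScott.closure_singleton]
  exact Subset.antisymm ((IsScott.isLowerSet_of_isClosed hFc).Iic_subset
    (sSup_mem_of_isIrreducible_of_isClosed hF hFc)) fun _ => le_sSup

end Scott

theorem ScottSober.of_isCompactlyGenerated (L : Type*) [CompleteLattice L]
    [IsCompactlyGenerated L] : ScottSober L := by
  let := scott L univ
  have : IsScott L univ := ⟨rfl⟩
  exact ⟨inferInstance, quasiSober_of_isCompactlyGenerated⟩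

/-- Let X be an ω type P-space. Then the lattice 𝒪(X) of open subsets of X,
equipped with the Scott topology, is sober. -/
theorem stmt11 {X : Type*} [TopologicalSpace X]
    (h1 : OmegaTypeSpace X) (h2 : PSpace X) :
    ScottSober (TopologicalSpace.Opens X) := by
  have : AlexandrovDiscrete X := h1.alexandrovDiscrete h2
  have : PrespectralSpace X := prespectralSpace_of_alexandrovDiscrete
  have : IsCompactlyGenerated (TopologicalSpace.Opens X) := isCompactlyGenerated_opens
  exact .of_isCompactlyGenerated _
end

section
/- Let P and Q be posets such that ΣP and ΣQ are ω type spaces. Then the Scott topology on the product lattice σ(P) × σ(Q) coincides with the product topology of Σσ(P) and Σσ(Q). -/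
/-!
Let `U` be a countable Scott open set, exhausted by finite sets `F 0 ⊆ F 1 ⊆ ⋯`. If open sets
`V n ⊇ F n` are given, every point of `U` lies in all but finitely many `V n`, and for this reason
the sets `U ∩ ⋂ m ≥ n, V m` are Scott open, although the intersection is infinite. They increase
to `U`, so a Scott open family containing `U` contains some `V n`. The same diagonal argument works
for pairs: a Scott open family of pairs containing `(U, U')` contains a whole box
`{V | F n ⊆ V} ×ˢ {V' | F' n ⊆ V'}`, which is open in the product topology. In an ω type space
only the whole space can fail to be a directed union of countable open sets. If it does, it is
compact, and the same argument applies with the whole space in place of every `F n`.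
-/

open Set Filter TopologicalSpace Topology

section Preorder

variable {α β : Type*} [Preorder α] [Preorder β]

theorem directedOn_prod {s : Set α} {t : Set β} (hs : DirectedOn (· ≤ ·) s)
    (ht : DirectedOn (· ≤ ·) t) : DirectedOn (· ≤ ·) (s ×ˢ t) := by
  rintro ⟨a, b⟩ ⟨ha, hb⟩ ⟨a', b'⟩ ⟨ha', hb'⟩
  obtain ⟨c, hc, hac, ha'c⟩ := hs a ha a' ha'
  obtain ⟨d, hd, hbd, hb'd⟩ := ht b hb b' hb'
  exact ⟨(c, d), ⟨hc, hd⟩, ⟨hac, hbd⟩, ⟨ha'c, hb'd⟩⟩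

theorem isLUB_prod_of_nonempty {s : Set α} {t : Set β} {a : α} {b : β} (hs : s.Nonempty)
    (ht : t.Nonempty) (ha : IsLUB s a) (hb : IsLUB t b) : IsLUB (s ×ˢ t) (a, b) := by
  rw [isLUB_prod, fst_image_prod s ht, snd_image_prod hs]
  exact ⟨ha, hb⟩

theorem isOpen_scott_iff {s : Set α} :
    IsOpen[scott α univ] s ↔ IsUpperSet s ∧ DirSupInacc s := by
  let : TopologicalSpace α := scott α univ
  have : IsScott α univ := ⟨rfl⟩
  rw [IsScott.isOpen_iff_isUpperSet_and_dirSupInaccOn (D := univ), dirSupInaccOn_univ]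

theorem continuous_scott_of_scottContinuous {f : α → β} (hf : ScottContinuous f) :
    Continuous[scott α univ, scott β univ] f := by
  let : TopologicalSpace α := scott α univ
  let : TopologicalSpace β := scott β univ
  have : IsScott α univ := ⟨rfl⟩
  have : IsScott β univ := ⟨rfl⟩
  exact (IsScott.scottContinuousOn_iff_continuous fun _ _ _ ↦ mem_univ _).1 hf.scottContinuousOn

variable (α β) in
theorem scott_prod_le :
    scott (α × β) univ ≤ @instTopologicalSpaceProd α β (scott α univ) (scott β univ) :=
  le_inf (continuous_iff_le_induced.1 (continuous_scott_of_scottContinuous .fst))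
    (continuous_iff_le_induced.1 (continuous_scott_of_scottContinuous .snd))

theorem specializes_of_le_of_isScott [TopologicalSpace α] [IsScott α univ] {a b : α}
    (h : a ≤ b) : b ⤳ a := by
  rw [specializes_iff_mem_closure, IsScott.closure_singleton]
  exact h

end Preorder

section Approximable

variable {α β : Type*} [Preorder α] [TopologicalSpace α] [Preorder β] [TopologicalSpace β]

/-- A point `a` of a topological preorder is monotonically approximable if it has a sequence of
neighbourhoods such that every choice of one point in each dominates a monotone sequence
with supremum `a`. This is the countability condition which reduces Scott openness to openness. -/
def MonotoneApproximable (a : α) : Prop :=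
  ∃ s : ℕ → Set α, (∀ n, s n ∈ 𝓝 a) ∧
    ∀ x : ℕ → α, (∀ n, x n ∈ s n) → ∃ y : ℕ → α, Monotone y ∧ y ≤ x ∧ IsLUB (range y) a

/-- A point of a topological preorder is directedly approximable if it is the supremum of a
nonempty directed set of monotonically approximable points. -/
def DirectedApproximable (a : α) : Prop :=
  ∃ d : Set α, d.Nonempty ∧ DirectedOn (· ≤ ·) d ∧ IsLUB d a ∧ ∀ c ∈ d, MonotoneApproximable c

namespace MonotoneApproximable

theorem prod {a : α} {b : β} (ha : MonotoneApproximable a) (hb : MonotoneApproximable b) :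
    MonotoneApproximable (a, b) := by
  obtain ⟨s, hs, hsa⟩ := ha
  obtain ⟨t, ht, htb⟩ := hb
  refine ⟨fun n ↦ s n ×ˢ t n, fun n ↦ prod_mem_nhds (hs n) (ht n), fun x hx ↦ ?_⟩
  obtain ⟨y, hy, hyx, hya⟩ := hsa (fun n ↦ (x n).1) fun n ↦ (hx n).1
  obtain ⟨z, hz, hzx, hzb⟩ := htb (fun n ↦ (x n).2) fun n ↦ (hx n).2
  refine ⟨fun n ↦ (y n, z n), hy.prodMk hz, fun n ↦ ⟨hyx n, hzx n⟩, ?_⟩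
  rw [isLUB_prod, ← range_comp, ← range_comp]
  exact ⟨hya, hzb⟩

theorem mem_nhds {a : α} (ha : MonotoneApproximable a) {A : Set α} (hA : IsUpperSet A)
    (hA' : DirSupInacc A) (haA : a ∈ A) : A ∈ 𝓝 a := by
  obtain ⟨s, hs, hsa⟩ := ha
  by_contra hAa
  have exists_notMem (n : ℕ) : ∃ x ∈ s n, x ∉ A :=
    not_subset.1 fun hsA ↦ hAa (mem_of_superset (hs n) hsA)
  choose x hxs hxA using exists_notMem
  obtain ⟨y, hy, hyx, hya⟩ := hsa x hxs
  obtain ⟨_, ⟨n, rfl⟩, hn⟩ :=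
    hA' (range_nonempty y) hy.directed_le.directedOn_range hya haA
  exact hxA n (hA (hyx n) hn)

theorem directedApproximable {a : α} (ha : MonotoneApproximable a) : DirectedApproximable a :=
  ⟨{a}, singleton_nonempty a, directedOn_singleton a, isLUB_singleton, by simpa using ha⟩

end MonotoneApproximable

namespace DirectedApproximable

theorem prod {a : α} {b : β} (ha : DirectedApproximable a) (hb : DirectedApproximable b) :
    DirectedApproximable (a, b) := by
  obtain ⟨d, hd, hd', hda, hdapp⟩ := ha
  obtain ⟨e, he, he', heb, heapp⟩ := hb
  exact ⟨d ×ˢ e, hd.prod he, directedOn_prod hd' he', isLUB_prod_of_nonempty hd he hda heb,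
    fun c hc ↦ (hdapp c.1 hc.1).prod (heapp c.2 hc.2)⟩

theorem le_scott (hspec : ∀ a b : α, a ≤ b → b ⤳ a) (happ : ∀ a : α, DirectedApproximable a) :
    ‹TopologicalSpace α› ≤ scott α univ := by
  intro A hA
  obtain ⟨hup, hinacc⟩ := isOpen_scott_iff.1 hA
  refine isOpen_iff_mem_nhds.2 fun a ha ↦ ?_
  obtain ⟨d, hd, hd', hda, hdapp⟩ := happ a
  obtain ⟨c, hcd, hcA⟩ := hinacc hd hd' hda ha
  exact hspec c a (hda.1 hcd) ((hdapp c hcd).mem_nhds hup hinacc hcA)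

end DirectedApproximable

theorem scott_prod_eq_of_directedApproximable [IsScott α univ] [IsScott β univ]
    (hα : ∀ a : α, DirectedApproximable a) (hβ : ∀ b : β, DirectedApproximable b) :
    scott (α × β) univ = @instTopologicalSpaceProd α β (scott α univ) (scott β univ) := by
  refine le_antisymm (scott_prod_le α β) ?_
  rw [← IsScott.topology_eq α univ, ← IsScott.topology_eq β univ]
  exact DirectedApproximable.le_scott
    (fun _ _ h ↦ (specializes_of_le_of_isScott h.1).prod (specializes_of_le_of_isScott h.2))
    fun p ↦ (hα p.1).prod (hβ p.2)

end Approximable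

section Opens

variable {X : Type*} [TopologicalSpace X] [TopologicalSpace (Opens X)] [IsScott (Opens X) univ]

theorem isOpen_setOf_subset_of_isCompact {K : Set X} (hK : IsCompact K) :
    IsOpen {U : Opens X | K ⊆ U} := by
  rw [IsScott.isOpen_iff_isUpperSet_and_dirSupInaccOn (D := univ), dirSupInaccOn_univ]
  refine ⟨fun U V hUV hU ↦ Subset.trans hU hUV, fun d hd hdir U hdU hKU ↦ ?_⟩
  have : Nonempty d := hd.to_subtype
  have hKd : K ⊆ ⋃ V : d, (V : Opens X) := by
    rwa [mem_ofPred_eq, ← hdU.sSup_eq, Opens.coe_sSup, biUnion_eq_iUnion] at hKU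
  obtain ⟨V, hKV⟩ :=
    hK.elim_directed_cover _ (fun V ↦ V.1.isOpen) hKd (directedOn_iff_directed.1 hdir)
  exact ⟨V, V.2, hKV⟩

theorem MonotoneApproximable.of_isCompact {U : Opens X} (hU : IsCompact (U : Set X)) :
    MonotoneApproximable U :=
  ⟨fun _ ↦ {V | (U : Set X) ⊆ V},
    fun _ ↦ (isOpen_setOf_subset_of_isCompact hU).mem_nhds (Subset.refl _),
    fun _ hV ↦ ⟨fun _ ↦ U, monotone_const, hV, by simp [range_const]⟩⟩

end Opens

section IsScott

variable {P : Type*} [Preorder P] [TopologicalSpace P]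

theorem isOpen_inter_iInter_of_finite_notMem (D : Set (Set P)) [IsScott P D] {ι : Type*}
    {U : Set P} (hU : IsOpen U) {s : ι → Set P} (hs : ∀ i, IsOpen (s i))
    (hfin : ∀ x ∈ U, {i | x ∉ s i}.Finite) : IsOpen (U ∩ ⋂ i, s i) := by
  have upper {t : Set P} (ht : IsOpen t) : IsUpperSet t := IsScott.isUpperSet_of_isOpen (D := D) ht
  have inacc {t : Set P} (ht : IsOpen t) : DirSupInaccOn D t :=
    (IsScott.isOpen_iff_isUpperSet_and_dirSupInaccOn.1 ht).2
  refine (IsScott.isOpen_iff_isUpperSet_and_dirSupInaccOn (D := D)).2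
    ⟨(upper hU).inter (isUpperSet_iInter fun i ↦ upper (hs i)), ?_⟩
  rintro d hdD hd hdir a hda ⟨haU, has⟩
  obtain ⟨x, hxd, hxU⟩ := inacc hU hdD hd hdir hda haU
  -- Only the finitely many `s i` which miss `x` still have to be entered.
  obtain ⟨y, hyd, hy⟩ := inacc ((hfin x hxU).isOpen_biInter fun i _ ↦ hs i) hdD hd hdir hda
    (mem_iInter₂.2 fun i _ ↦ mem_iInter.1 has i)
  obtain ⟨z, hzd, hxz, hyz⟩ := hdir x hxd y hyd
  refine ⟨z, hzd, upper hU hxz hxU, mem_iInter.2 fun i ↦ ?_⟩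
  by_cases hxi : x ∈ s i
  · exact upper (hs i) hxz hxi
  · exact upper (hs i) hyz (mem_iInter₂.1 hy i hxi)

theorem exists_monotone_isLUB_of_finite_notMem (D : Set (Set P)) [IsScott P D] {U : Opens P}
    {V : ℕ → Opens P} (hfin : ∀ x ∈ U, {n | x ∉ V n}.Finite) :
    ∃ W : ℕ → Opens P, Monotone W ∧ W ≤ V ∧ IsLUB (range W) U := by
  have hopen (n : ℕ) : IsOpen (U ∩ ⋂ m : Ici n, (V m : Set P)) :=
    isOpen_inter_iInter_of_finite_notMem D U.isOpen (fun m ↦ (V m).isOpen) fun x hx ↦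
      (hfin x hx).preimage Subtype.val_injective.injOn
  refine ⟨fun n ↦ ⟨_, hopen n⟩, ?_, fun n x hx ↦ mem_iInter.1 hx.2 ⟨n, self_mem_Ici⟩,
    forall_mem_range.2 fun n x hx ↦ hx.1, ?_⟩
  · exact fun n k hnk x hx ↦
      ⟨hx.1, mem_iInter.2 fun m ↦ mem_iInter.1 hx.2 ⟨m, hnk.trans m.2⟩⟩
  · intro T hT x hx
    obtain ⟨N, hN⟩ := (hfin x hx).bddAbove
    have hxV (m : Ici (N + 1)) : x ∈ V m := by
      by_contra hxm
      exact (Nat.lt_of_succ_le m.2).not_ge (hN hxm)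
    exact hT (mem_range_self (N + 1)) ⟨hx, mem_iInter.2 hxV⟩

variable [TopologicalSpace (Opens P)] [IsScott (Opens P) univ]

theorem MonotoneApproximable.of_countable (D : Set (Set P)) [IsScott P D] {U : Opens P}
    (hU : (U : Set P).Countable) : MonotoneApproximable U := by
  obtain ⟨f, hf⟩ := countable_iff_exists_injOn.1 hU
  have hF (n : ℕ) : (U ∩ f ⁻¹' Iic n : Set P).Finite :=
    .of_finite_image ((finite_Iic n).subset (image_subset_iff.2 inter_subset_right))
      (hf.mono inter_subset_left)
  refine ⟨fun n ↦ {V | (U ∩ f ⁻¹' Iic n : Set P) ⊆ V}, fun n ↦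
    (isOpen_setOf_subset_of_isCompact (hF n).isCompact).mem_nhds inter_subset_left, fun V hV ↦ ?_⟩
  refine exists_monotone_isLUB_of_finite_notMem D fun x hx ↦ (finite_Iio (f x)).subset fun n hn ↦ ?_
  exact lt_of_not_ge fun hfn : f x ≤ n ↦ hn (hV n ⟨hx, hfn⟩)

theorem DirectedApproximable.of_forall_exists_countable (D : Set (Set P)) [IsScott P D]
    {U : Opens P} (hU : ∀ x ∈ U, ∃ V : Opens P, (V : Set P).Countable ∧ x ∈ V ∧ V ≤ U) :
    DirectedApproximable U := by
  refine ⟨{V | (V : Set P).Countable ∧ V ≤ U}, ⟨⊥, by simp⟩, ?_, ⟨fun V hV ↦ hV.2, ?_⟩,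
    fun V hV ↦ .of_countable D hV.1⟩
  · exact fun V hV W hW ↦ ⟨V ⊔ W, ⟨hV.1.union hW.1, sup_le hV.2 hW.2⟩, le_sup_left, le_sup_right⟩
  · intro T hT x hx
    obtain ⟨V, hV, hxV, hVU⟩ := hU x hx
    exact hT ⟨hV, hVU⟩ hxV

end IsScott

theorem exists_opens_mem_ne_top {X : Type*} [TopologicalSpace X] [NoncompactSpace X] (x : X) :
    ∃ U : Opens X, x ∈ U ∧ U ≠ ⊤ := by
  by_contra! h
  have hx : 𝓝 x = ⊤ := by
    refine top_unique ((nhds_basis_opens x).ge_iff.2 fun s hs ↦ mem_top.2 ?_)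
    exact congrArg SetLike.coe (h ⟨s, hs.2⟩ hs.1)
  have : CompactSpace X := ⟨fun f _ _ ↦ ⟨x, mem_univ x, by rwa [ClusterPt, hx, top_inf_eq]⟩⟩
  exact noncompact_univ X isCompact_univ

namespace OmegaTypeSpace

variable {X : Type*} [TopologicalSpace X]

theorem exists_countable_mem_le_of_ne_top (hX : OmegaTypeSpace X) {U : Opens X} (hU : U ≠ ⊤)
    {x : X} (hx : x ∈ U) : ∃ V : Opens X, (V : Set X).Countable ∧ x ∈ V ∧ V ≤ U := by
  obtain ⟨S, hS, hgen⟩ := hX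
  have hbasis := isTopologicalBasis_of_subbasis hgen
  obtain ⟨_, ⟨F, hF, rfl⟩, hxF, hFU⟩ := hbasis.exists_subset_of_mem_open hx U.isOpen
  obtain rfl | ⟨s, hsF⟩ := F.eq_empty_or_nonempty
  · exact absurd (Opens.ext (univ_subset_iff.1 (sInter_empty ▸ hFU))) hU
  · exact ⟨⟨⋂₀ F, hbasis.isOpen ⟨F, hF, rfl⟩⟩, (hS s (hF.2 hsF)).mono (sInter_subset_of_mem hsF),
      hxF, hFU⟩

theorem exists_countable_mem_le [NoncompactSpace X] (hX : OmegaTypeSpace X) {U : Opens X}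
    {x : X} (hx : x ∈ U) : ∃ V : Opens X, (V : Set X).Countable ∧ x ∈ V ∧ V ≤ U := by
  obtain ⟨V, hxV, hV⟩ := exists_opens_mem_ne_top x
  obtain ⟨W, hW, hxW, hWUV⟩ := hX.exists_countable_mem_le_of_ne_top (U := U ⊓ V)
    (fun h ↦ hV (inf_eq_top_iff.1 h).2) ⟨hx, hxV⟩
  exact ⟨W, hW, hxW, hWUV.trans inf_le_left⟩

theorem directedApproximable {P : Type*} [Preorder P] [TopologicalSpace P] (D : Set (Set P))
    [IsScott P D] [TopologicalSpace (Opens P)] [IsScott (Opens P) univ] (hP : OmegaTypeSpace P)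
    (U : Opens P) : DirectedApproximable U := by
  by_cases hcompact : CompactSpace P
  · by_cases hU : U = ⊤
    · subst hU
      exact (MonotoneApproximable.of_isCompact isCompact_univ).directedApproximable
    · exact .of_forall_exists_countable D fun _ ↦ hP.exists_countable_mem_le_of_ne_top hU
  · have : NoncompactSpace P := not_compactSpace_iff.1 hcompact
    exact .of_forall_exists_countable D fun _ ↦ hP.exists_countable_mem_le

end OmegaTypeSpace

theorem stmt13_general {P Q : Type*} [Preorder P] [Preorder Q]
    [TopologicalSpace P] (D : Set (Set P)) [IsScott P D]
    [TopologicalSpace Q] (E : Set (Set Q)) [IsScott Q E]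
    (hP : OmegaTypeSpace P) (hQ : OmegaTypeSpace Q) :
    scott (Opens P × Opens Q) univ =
      @instTopologicalSpaceProd (Opens P) (Opens Q) (scott (Opens P) univ)
        (scott (Opens Q) univ) :=
  let := scott (Opens P) univ
  let := scott (Opens Q) univ
  have : IsScott (Opens P) univ := ⟨rfl⟩
  have : IsScott (Opens Q) univ := ⟨rfl⟩
  scott_prod_eq_of_directedApproximable (hP.directedApproximable D) (hQ.directedApproximable E)

/-- Let P and Q be posets such that ΣP and ΣQ are ω type spaces. Then the
Scott topology on the product lattice σ(P) × σ(Q) coincides with the product topology of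
Σσ(P) and Σσ(Q).  (Here P and Q carry their Scott topologies, so `Opens P = σ(P)` and
`Opens Q = σ(Q)` as complete lattices ordered by inclusion.) -/
theorem stmt13 {P Q : Type*} [PartialOrder P] [PartialOrder Q]
    [TopologicalSpace P] [Topology.IsScott P Set.univ]
    [TopologicalSpace Q] [Topology.IsScott Q Set.univ]
    (hP : OmegaTypeSpace P) (hQ : OmegaTypeSpace Q) :
    Topology.scott (TopologicalSpace.Opens P × TopologicalSpace.Opens Q) Set.univ =
      @instTopologicalSpaceProd (TopologicalSpace.Opens P) (TopologicalSpace.Opens Q)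
        (Topology.scott (TopologicalSpace.Opens P) Set.univ)
        (Topology.scott (TopologicalSpace.Opens Q) Set.univ) :=
  stmt13_general univ univ hP hQ
end

section
/- Let P be a countable poset. Then the complete lattice σ(P) of Scott-open subsets of P, equipped with the Scott topology, is first-countable. -/
/-!
If `V : ι → σ(P)` is a family such that every point of some `U ∈ σ(P)` lies in all but finitely
many `V i`, then `U ∩ ⋂ i, V i` is again Scott-open. Hence the sets `U ∩ ⋂ i ∉ F, V i`, for `F`
finite, form a directed family in `σ(P)` with supremum `U`, so `V` converges to `U` in the Scott
topology. For countable `P` the topology of pointwise convergence, induced from the countable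
power `P → Prop` of the Sierpiński space, is second-countable. Sequences therefore suffice to
compare it with the Scott topology, and the two coincide.
-/

open Filter Set TopologicalSpace Topology

section ScottOpen

variable {P ι : Type*} [Preorder P] [TopologicalSpace P]

theorem isOpen_inter_iInter_of_eventually_mem (D : Set (Set P)) [IsScott P D] {U : Set P}
    {V : ι → Set P} (hU : IsOpen U) (hV : ∀ i, IsOpen (V i))
    (hUV : ∀ p ∈ U, ∀ᶠ i in cofinite, p ∈ V i) :
    IsOpen (U ∩ ⋂ i, V i) := by
  have upper {s : Set P} (hs : IsOpen s) : IsUpperSet s := IsScott.isUpperSet_of_isOpen (D := D) hs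
  have inacc {s : Set P} (hs : IsOpen s) : DirSupInaccOn D s :=
    (IsScott.isOpen_iff_isUpperSet_and_dirSupInaccOn.1 hs).2
  refine (IsScott.isOpen_iff_isUpperSet_and_dirSupInaccOn (D := D)).2
    ⟨(upper hU).inter (isUpperSet_iInter fun i => upper (hV i)), ?_⟩
  rintro d hdD hne hd a ha ⟨haU, haV⟩
  obtain ⟨x, hxd, hxU⟩ := inacc hU hdD hne hd ha haU
  -- Above `x` only the finitely many `V i` that miss `x` remain to be entered.
  have hopen : IsOpen (⋂ i ∈ {i | x ∉ V i}, V i) :=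
    (eventually_cofinite.1 (hUV x hxU)).isOpen_biInter fun i _ => hV i
  obtain ⟨y, hyd, hyV⟩ :=
    inacc hopen hdD hne hd ha (mem_iInter₂.2 fun i _ => mem_iInter.1 haV i)
  obtain ⟨z, hzd, hxz, hyz⟩ := hd x hxd y hyd
  refine ⟨z, hzd, upper hU hxz hxU, mem_iInter.2 fun i => ?_⟩
  by_cases hxi : x ∈ V i
  · exact upper (hV i) hxz hxi
  · exact upper (hV i) hyz (mem_iInter₂.1 hyV i hxi)

variable [TopologicalSpace (Opens P)] [IsScott (Opens P) univ]

theorem tendsto_cofinite_nhds_opens (D : Set (Set P)) [IsScott P D] {U : Opens P}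
    {V : ι → Opens P} (hUV : ∀ p ∈ U, ∀ᶠ i in cofinite, p ∈ V i) : Tendsto V cofinite (𝓝 U) := by
  let W (F : Finset ι) : Opens P := ⟨U ∩ ⋂ i : {i // i ∉ F}, V i,
    isOpen_inter_iInter_of_eventually_mem D U.isOpen (fun i => (V i).isOpen) fun p hp =>
      Subtype.val_injective.tendsto_cofinite.eventually (hUV p hp)⟩
  have mem_W {F : Finset ι} {p : P} : p ∈ W F ↔ p ∈ U ∧ ∀ i ∉ F, p ∈ V i :=
    and_congr_right fun _ => mem_iInter.trans Subtype.forall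
  have W_mono : Monotone W := fun F G hFG p hp =>
    mem_W.2 ⟨(mem_W.1 hp).1, fun i hi => (mem_W.1 hp).2 i fun hiF => hi (hFG hiF)⟩
  have isLUB_W : IsLUB (range W) U := by
    refine ⟨forall_mem_range.2 fun F p hp => (mem_W.1 hp).1, fun T hT p hp => ?_⟩
    have hfin : {i | p ∉ V i}.Finite := eventually_cofinite.1 (hUV p hp)
    refine hT (mem_range_self hfin.toFinset) (mem_W.2 ⟨hp, fun i hi => ?_⟩)
    simpa only [Finite.mem_toFinset, mem_ofPred_eq, not_not] using hi
  refine tendsto_nhds.2 fun 𝒱 h𝒱 hU => ?_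
  obtain ⟨h𝒱_upper, h𝒱_inacc⟩ :=
    (IsScott.isOpen_iff_isUpperSet_and_dirSupInaccOn (D := univ)).1 h𝒱
  obtain ⟨_, ⟨F, rfl⟩, hF⟩ := h𝒱_inacc (mem_univ _) (range_nonempty W)
    (directedOn_range.2 W_mono.directed_le) isLUB_W hU
  filter_upwards [F.eventually_cofinite_notMem] with i hi
  exact h𝒱_upper (fun p hp => (mem_W.1 hp).2 i hi) hF

end ScottOpen

theorem continuous_mem_opens {X : Type*} [TopologicalSpace X] [TopologicalSpace (Opens X)]
    [IsScott (Opens X) univ] : Continuous fun (U : Opens X) (x : X) => x ∈ U := by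
  refine continuous_pi fun x => continuous_Prop.2 ?_
  refine (IsScott.isOpen_iff_isUpperSet_and_dirSupInaccOn (D := univ)).2
    ⟨fun U V hUV hxU => hUV hxU, fun d _ _ _ U hdU hxU => ?_⟩
  exact Opens.mem_sSup.1 (hdU.sSup_eq ▸ hxU : x ∈ sSup d)

theorem isInducing_mem_opens {P : Type*} [Preorder P] [Countable P] [TopologicalSpace P]
    (D : Set (Set P)) [IsScott P D] [TopologicalSpace (Opens P)] [IsScott (Opens P) univ] :
    IsInducing fun (U : Opens P) (p : P) => p ∈ U := by
  refine isInducing_iff_nhds.2 fun U => le_antisymm continuous_mem_opens.continuousAt.le_comap ?_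
  refine tendsto_id'.1 (tendsto_of_seq_tendsto fun V hV => ?_)
  have hpointwise : ∀ p ∈ U, ∀ᶠ n in atTop, p ∈ V n := fun p hp =>
    tendsto_nhds_Prop.1 (tendsto_pi_nhds.1 (tendsto_comap_iff.1 hV) p) hp
  rw [← Nat.cofinite_eq_atTop] at hpointwise ⊢
  exact tendsto_cofinite_nhds_opens D hpointwise

theorem stmt15_general {P : Type*} [Preorder P] [Countable P] [TopologicalSpace P]
    (D : Set (Set P)) [IsScott P D] :
    @SecondCountableTopology (Opens P) (scott (Opens P) univ) := by
  let _ : TopologicalSpace (Opens P) := scott (Opens P) univ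
  have : IsScott (Opens P) univ := ⟨rfl⟩
  exact (isInducing_mem_opens D).secondCountableTopology

/-- Let P be a countable poset. Then the complete lattice σ(P) of Scott-open
subsets of P (here `Opens P` with P carrying its Scott topology), equipped with the Scott
topology, is first-countable. -/
theorem stmt15 {P : Type*} [PartialOrder P] [Countable P]
    [TopologicalSpace P] [Topology.IsScott P Set.univ] :
    @FirstCountableTopology (TopologicalSpace.Opens P)
      (Topology.scott (TopologicalSpace.Opens P) Set.univ) :=
  @SecondCountableTopology.to_firstCountableTopology _ (_) (stmt15_general univ)
end

section
/- Let P and Q be posets. If ΣP and ΣQ are first-countable, then the Scott topology on the product poset P × Q coincides with the product topology of ΣP and ΣQ. -/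
/-!
A Scott open subset of `P × Q` has Scott open sections, and sections already control products with
compact sets: if `D` is directed with supremum `d` and `{d} × K ⊆ W` with `K` compact, then the
open sections of `W` over the points of `D` form a directed cover of `K`, so a single one contains
`K`. Hence a continuous map from a locally compact space into `P × Q` pulls `W` back to an open
set, and such maps detect the open sets of a compactly generated space. Products of first-countable
spaces are sequential, hence compactly generated.
-/

open Set Topology

section SeparatelyOpen

variable {P Y : Type*} [Preorder P] [TopologicalSpace P] [IsScott P univ] [TopologicalSpace Y]
  {W : Set (P × Y)}

theorem isOpen_setOf_forall_mem_of_isOpen_sections (hP : ∀ y, IsOpen {x | (x, y) ∈ W})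
    (hY : ∀ x, IsOpen {y | (x, y) ∈ W}) {K : Set Y} (hK : IsCompact K) :
    IsOpen {x | ∀ y ∈ K, (x, y) ∈ W} := by
  have section_mono : Monotone fun x ↦ {y | (x, y) ∈ W} :=
    fun _ _ h y hy ↦ IsScott.isUpperSet_of_isOpen (D := univ) (hP y) h hy
  rw [IsScott.isOpen_iff_isUpperSet_and_dirSupInaccOn (D := univ), dirSupInaccOn_univ]
  refine ⟨fun x x' h hx y hy ↦ section_mono h (hx y hy), fun D hne hdir d hd hdK ↦ ?_⟩
  have : Nonempty D := hne.to_subtype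
  have hcover : K ⊆ ⋃ e : D, {y | (e.1, y) ∈ W} := by
    intro y hy
    have hinacc := (IsScott.isOpen_iff_isUpperSet_and_dirSupInaccOn (D := univ).1 (hP y)).2
    obtain ⟨e, he, hey⟩ := hinacc (mem_univ D) hne hdir hd (hdK y hy)
    exact mem_iUnion.2 ⟨⟨e, he⟩, hey⟩
  have hdirected : Directed (· ⊆ ·) fun e : D ↦ {y | (e.1, y) ∈ W} :=
    hdir.directed_val.mono_comp _ section_mono
  obtain ⟨e, he⟩ := hK.elim_directed_cover _ (fun e : D ↦ hY e) hcover hdirected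
  exact ⟨e, e.2, he⟩

theorem isOpen_preimage_of_isOpen_sections {Z : Type*} [TopologicalSpace Z]
    [LocallyCompactSpace Z] {f : Z → P × Y} (hf : Continuous f)
    (hP : ∀ y, IsOpen {x | (x, y) ∈ W}) (hY : ∀ x, IsOpen {y | (x, y) ∈ W}) :
    IsOpen (f ⁻¹' W) := by
  refine isOpen_iff_mem_nhds.2 fun z hz ↦ ?_
  obtain ⟨K, hKz, hKW, hK⟩ := local_compact_nhds
    (hf.snd.continuousAt.preimage_mem_nhds ((hY (f z).1).mem_nhds hz))
  have hU := isOpen_setOf_forall_mem_of_isOpen_sections hP hY (hK.image hf.snd)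
  have hzU := hf.fst.continuousAt.preimage_mem_nhds (hU.mem_nhds (forall_mem_image.2 hKW))
  filter_upwards [hKz, hzU] with z' hz'K hz'U
  exact hz'U _ (mem_image_of_mem _ hz'K)

theorem isOpen_of_isOpen_sections [CompactlyGeneratedSpace (P × Y)]
    (hP : ∀ y, IsOpen {x | (x, y) ∈ W}) (hY : ∀ x, IsOpen {y | (x, y) ∈ W}) : IsOpen W :=
  CompactlyGeneratedSpace.isOpen' fun _ _ _ _ _ hf ↦
    isOpen_preimage_of_isOpen_sections hf hP hY

end SeparatelyOpen

theorem scottContinuous_iff_continuous {P Q : Type*} [Preorder P] [Preorder Q]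
    [TopologicalSpace P] [IsScott P univ] [TopologicalSpace Q] [IsScott Q univ] {f : P → Q} :
    ScottContinuous f ↔ Continuous f := by
  rw [← scottContinuousOn_univ, IsScott.scottContinuousOn_iff_continuous fun _ _ _ ↦ mem_univ _]

section Product

variable {P Q : Type*} [Preorder P] [Preorder Q] [TopologicalSpace P] [IsScott P univ]
  [TopologicalSpace Q] [IsScott Q univ]

theorem continuous_ofScott_prod : Continuous (WithScott.ofScott : WithScott (P × Q) → P × Q) :=
  (scottContinuous_iff_continuous (P := WithScott (P × Q)).1 ScottContinuous.fst).prodMk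
    (scottContinuous_iff_continuous (P := WithScott (P × Q)).1 ScottContinuous.snd)

theorem continuous_toScott_prod [CompactlyGeneratedSpace (P × Q)] :
    Continuous (WithScott.toScott : P × Q → WithScott (P × Q)) := by
  have continuous_left (y : Q) : Continuous fun x : P ↦ WithScott.toScott (x, y) :=
    scottContinuous_iff_continuous.1 (ScottContinuous.id.prodMk (ScottContinuous.const y))
  have continuous_right (x : P) : Continuous fun y : Q ↦ WithScott.toScott (x, y) :=
    scottContinuous_iff_continuous.1 ((ScottContinuous.const x).prodMk ScottContinuous.id)
  exact continuous_def.2 fun W hW ↦ isOpen_of_isOpen_sections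
    (fun y ↦ hW.preimage (continuous_left y)) (fun x ↦ hW.preimage (continuous_right x))

end Product

theorem stmt18_general {P Q : Type*} [Preorder P] [Preorder Q]
    [TopologicalSpace P] [IsScott P univ] [TopologicalSpace Q] [IsScott Q univ]
    [CompactlyGeneratedSpace (P × Q)] : IsScott (P × Q) univ :=
  -- `toScott` and `ofScott` are both the identity map, so their continuity compares topologies.
  ⟨le_antisymm (continuous_id_iff_le.1 continuous_toScott_prod)
    (continuous_id_iff_le.1 continuous_ofScott_prod)⟩

/-- Let P and Q be posets. If ΣP and ΣQ are first-countable, then the Scott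
topology on the product poset P × Q coincides with the product topology of ΣP and ΣQ. -/
theorem stmt18 {P Q : Type*} [PartialOrder P] [PartialOrder Q]
    [TopologicalSpace P] [Topology.IsScott P Set.univ]
    [TopologicalSpace Q] [Topology.IsScott Q Set.univ]
    [FirstCountableTopology P] [FirstCountableTopology Q] :
    Topology.IsScott (P × Q) Set.univ :=
  stmt18_general
end
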